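/- Closed-loop safety under arbitrary feasible plans: let h hc : ℕ with 0 < hc and hc ≤ h, and let x : ℕ → X and p : ℕ → (ℕ → U) satisfy, for every j: 0 ≤ l (traj (x j) (p j) k) for all k < h, traj (x j) (p j) h ∈ S, and x (j+1) = traj (x j) (p j) hc. Then every closed-loop state remains in the safe set, x j ∈ S for all j, and every executed intermediate state satisfies the constraint: 0 ≤ l (traj (x j) (p j) k) for all j and all k ≤ hc. -/

import Mathlib

/-- Discrete-time trajectory under dynamics `f`, initial state `x`, controls `u`. -/
def traj {X U : Type*} (f : X → U → X) (x : X) (u : ℕ → U) : ℕ → X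
  | 0 => x
  | n + 1 => f (traj f x u n) (u n)

/-- The safe set: states from which some control sequence keeps `l ≥ 0` forever. -/
def safeSet {X U : Type*} (f : X → U → X) (l : X → ℝ) : Set X :=
  {x | ∃ u : ℕ → U, ∀ n : ℕ, 0 ≤ l (traj f x u n)}

/-- MPC feasibility for planning horizon `h`: some control keeps the constraint satisfied
for the first `h` steps and steers the terminal state into the safe set. -/
def MPCFeasible {X U : Type*} (f : X → U → X) (l : X → ℝ) (h : ℕ) (x : X) : Prop :=
  ∃ u : ℕ → U, (∀ k < h, 0 ≤ l (traj f x u k)) ∧ traj f x u h ∈ safeSet f l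

theorem traj_congr_aux {X U : Type*} (f : X → U → X) (x : X) (u v : ℕ → U) (n : ℕ)
    (H : ∀ k < n, u k = v k) : traj f x u n = traj f x v n := by
  induction n with
  | zero => rfl
  | succ n ih =>
    simp only [traj]
    rw [ih (fun k hk => H k (by omega)), H n (by omega)]

theorem traj_add_aux {X U : Type*} (f : X → U → X) (x : X) (u : ℕ → U) (m n : ℕ) :
    traj f x u (m + n) = traj f (traj f x u m) (fun k => u (m + k)) n := by
  induction n with
  | zero => rfl
  | succ n ih =>
    rw [← Nat.add_assoc]
    simp only [traj]
    rw [ih]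

theorem feasible_safe_aux {X U : Type*} (f : X → U → X) (l : X → ℝ) (h : ℕ) (x : X)
    (hx : MPCFeasible f l h x) : x ∈ safeSet f l := by
  obtain ⟨u, hu, v, hv⟩ := hx
  have key : ∀ k ≤ h, traj f x (fun n => if n < h then u n else v (n - h)) k = traj f x u k := by
    intro k hk
    apply traj_congr_aux
    intro i hi
    exact if_pos (by omega)
  refine ⟨fun n => if n < h then u n else v (n - h), fun n => ?_⟩
  by_cases hn : n < h
  · rw [key n hn.le]
    exact hu n hn
  · obtain ⟨m, rfl⟩ := Nat.exists_eq_add_of_le (not_lt.mp hn)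
    rw [traj_add_aux, key h le_rfl]
    have e : (fun k => (fun n => if n < h then u n else v (n - h)) (h + k)) = v := by
      funext k
      simp
    rw [e]
    exact hv m

/-- Closed-loop safety under arbitrary feasible plans: if at every step a feasible plan is
executed for `hc` controls (with `0 < hc ≤ h`), then every closed-loop state remains in the
safe set and every executed intermediate state satisfies the constraint. -/
theorem closed_loop_safety {X U : Type*} (f : X → U → X) (l : X → ℝ)
    (h hc : ℕ) (hpos : 0 < hc) (hhc : hc ≤ h)
    (x : ℕ → X) (p : ℕ → (ℕ → U))
    (hCons : ∀ j : ℕ, ∀ k < h, 0 ≤ l (traj f (x j) (p j) k))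
    (hEnd : ∀ j : ℕ, traj f (x j) (p j) h ∈ safeSet f l)
    (hStep : ∀ j : ℕ, x (j + 1) = traj f (x j) (p j) hc) :
    (∀ j : ℕ, x j ∈ safeSet f l) ∧
    (∀ j : ℕ, ∀ k ≤ hc, 0 ≤ l (traj f (x j) (p j) k)) := by
  have hS : ∀ j : ℕ, x j ∈ safeSet f l := fun j =>
    feasible_safe_aux f l h (x j) ⟨p j, hCons j, hEnd j⟩
  refine ⟨hS, fun j k hk => ?_⟩
  rcases hk.lt_or_eq with hk | rfl
  · exact hCons j k (by omega)
  · rw [← hStep j]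
    obtain ⟨u, hu⟩ := hS (j + 1)
    exact hu 0
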